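/- Let d ≥ 1, r ≥ 0 and let B ∈ BS(Z(d,r)) be a balanced shifted tableau of shape Z(d,r). Then there exists a unique reduced word a ∈ Red(w^{(d,r)}) whose reflection order ro(a) = (γ_1, …, γ_ℓ), with ℓ = d(d+r), satisfies γ_{B(x)} = f(x) for every box x ∈ D(Z(d,r)). -/

import Mathlib

open scoped BigOperators

namespace BST

/-- `lam` (1-indexed, with `d` parts) is a strict partition: strictly decreasing
positive parts `lam 1 > lam 2 > ⋯ > lam d > 0`. -/
def IsStrictPartition (d : ℕ) (lam : ℕ → ℕ) : Prop :=
  (∀ i : ℕ, 1 ≤ i → i < d → lam (i + 1) < lam i) ∧ 1 ≤ lam d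

/-- The size `|λ| = λ_1 + ⋯ + λ_d`. -/
def sizeP (d : ℕ) (lam : ℕ → ℕ) : ℕ := ∑ i ∈ Finset.Icc 1 d, lam i

/-- The shifted diagram `D(λ) ⊆ ℤ × ℤ`: row `i` (1 ≤ i ≤ d) occupies columns
`i - d, …, λ_i + i - d - 1`. -/
def Diagram (d : ℕ) (lam : ℕ → ℕ) : Set (ℤ × ℤ) :=
  {p : ℤ × ℤ | 1 ≤ p.1 ∧ p.1 ≤ (d : ℤ) ∧ p.1 - (d : ℤ) ≤ p.2 ∧
    p.2 + (d : ℤ) + 1 ≤ (lam p.1.toNat : ℤ) + p.1}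

/-- The hook `H(i,c)`. -/
def Hook (d : ℕ) (lam : ℕ → ℕ) (i c : ℤ) : Set (ℤ × ℤ) :=
  {(i, c)} ∪ {p ∈ Diagram d lam | (p.1 = i ∧ c < p.2) ∨ (p.2 = c ∧ i < p.1)} ∪
    {p ∈ Diagram d lam | c < 0 ∧ p.1 = (d : ℤ) + 1 + c}

/-- The extended hook `H̃(i,c)`. -/
def ExtHook (d : ℕ) (lam : ℕ → ℕ) (i c : ℤ) : Set (ℤ × ℤ) :=
  Hook d lam i c ∪ {p : ℤ × ℤ | c < 0 ∧ p = ((d : ℤ) + 1 + c, c)}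

/-- The extended diagram `D(λ) ∪ {(i, i - d - 1) : 1 ≤ i ≤ d}`. -/
def ExtDiagram (d : ℕ) (lam : ℕ → ℕ) : Set (ℤ × ℤ) :=
  Diagram d lam ∪ {p : ℤ × ℤ | 1 ≤ p.1 ∧ p.1 ≤ (d : ℤ) ∧ p.2 = p.1 - ((d : ℤ) + 1)}

/-- The extended filling `B̃`, with `B̃(i, i - d - 1) = B(i, 0)`. -/
def ExtFilling (d : ℕ) (B : ℤ × ℤ → ℕ) : ℤ × ℤ → ℕ :=
  fun p => if p.2 = p.1 - ((d : ℤ) + 1) then B (p.1, 0) else B p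

/-- The rank function `rk(i,c)`. -/
def rk (d : ℕ) (lam : ℕ → ℕ) (i c : ℤ) : ℤ :=
  if 0 ≤ c then (lam i.toNat : ℤ) - d + i - c
  else (lam i.toNat : ℤ) - d + i + (lam ((d : ℤ) + 1 + c).toNat : ℤ) + c + 1

/-- A bijective filling of `D(λ)` with `1, …, |λ|` (normalized to be `0` off the diagram). -/
def IsFilling (d : ℕ) (lam : ℕ → ℕ) (B : ℤ × ℤ → ℕ) : Prop :=
  Set.BijOn B (Diagram d lam) (Set.Icc 1 (sizeP d lam)) ∧
    ∀ p : ℤ × ℤ, p ∉ Diagram d lam → B p = 0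

/-- A balanced shifted tableau: a bijective filling such that at each box `(i,c)`,
`B(i,c)` is the `rk(i,c)`-th largest entry of the multiset of values of `B̃` on the
extended hook, i.e. exactly `rk(i,c) - 1` boxes of the extended hook carry a value
strictly larger than `B(i,c)`. -/
def IsBalanced (d : ℕ) (lam : ℕ → ℕ) (B : ℤ × ℤ → ℕ) : Prop :=
  IsFilling d lam B ∧ ∀ p ∈ Diagram d lam,
    ({q ∈ ExtHook d lam p.1 p.2 | B p < ExtFilling d B q}.ncard : ℤ) =
      rk d lam p.1 p.2 - 1

/-- A standard Young tableau of shifted shape `λ`. -/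
def IsSYT (d : ℕ) (lam : ℕ → ℕ) (B : ℤ × ℤ → ℕ) : Prop :=
  IsFilling d lam B ∧ ∀ p ∈ Diagram d lam, ∀ q ∈ Diagram d lam,
    ((p.1 = q.1 ∧ p.2 < q.2) → B p < B q) ∧ ((p.2 = q.2 ∧ p.1 < q.1) → B p < B q)

/-- The simple reflections of `W(B_n)`, acting on `ℤ`: `s 0` swaps `1 ↔ -1`,
and `s a` (for `a ≥ 1`) swaps `a ↔ a+1` and `-a ↔ -(a+1)`. -/
def sB (a : ℕ) : Equiv.Perm ℤ :=
  if a = 0 then Equiv.swap 1 (-1)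
  else Equiv.swap (a : ℤ) ((a : ℤ) + 1) * Equiv.swap (-(a : ℤ)) (-(a : ℤ) - 1)

/-- The product `s_{a_1} s_{a_2} ⋯ s_{a_m}` of a word. -/
def wordProd (L : List ℕ) : Equiv.Perm ℤ := (L.map sB).prod

/-- A signed permutation in `W(B_n)`: odd, and the identity beyond `n`. -/
def IsSignedPerm (n : ℕ) (w : Equiv.Perm ℤ) : Prop :=
  (∀ i : ℤ, w (-i) = -(w i)) ∧ ∀ i : ℤ, (n : ℤ) < |i| → w i = i

/-- The Coxeter length of `w` in `W(B_n)`. -/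
noncomputable def lengthB (n : ℕ) (w : Equiv.Perm ℤ) : ℕ :=
  sInf {m : ℕ | ∃ L : List ℕ, (∀ a ∈ L, a < n) ∧ wordProd L = w ∧ L.length = m}

/-- `L` is a reduced word of `w` in `W(B_n)`. -/
def IsReducedWord (n : ℕ) (w : Equiv.Perm ℤ) (L : List ℕ) : Prop :=
  (∀ a ∈ L, a < n) ∧ wordProd L = w ∧ L.length = lengthB n w

/-- The vector `e_k` (for `k ≥ 1` the `k`-th standard basis vector, with the
conventions `e 0 = 0` and `e (-k) = - e k`), represented as an odd function `ℤ → ℤ`. -/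
def eVec (k : ℤ) : ℤ → ℤ :=
  fun t => if t = 0 then 0 else if t = k then 1 else if t = -k then -1 else 0

/-- The positive roots of type `B_n`. -/
def PosRoots (n : ℕ) : Set (ℤ → ℤ) :=
  {v | (∃ i j : ℤ, 1 ≤ i ∧ i < j ∧ j ≤ (n : ℤ) ∧
        (v = eVec j - eVec i ∨ v = eVec j + eVec i)) ∨
       (∃ i : ℤ, 1 ≤ i ∧ i ≤ (n : ℤ) ∧ v = eVec i)}

/-- The action of a signed permutation on vectors: `w · e_i = e_{w(i)}`. -/
def actB (w : Equiv.Perm ℤ) (v : ℤ → ℤ) : ℤ → ℤ := fun t => v (w⁻¹ t)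

/-- The inversion set `Inv(w) = {α ∈ Φ⁺ : w⁻¹ · α ∈ -Φ⁺}`. -/
def InvSet (n : ℕ) (w : Equiv.Perm ℤ) : Set (ℤ → ℤ) :=
  {α | α ∈ PosRoots n ∧ -(actB w⁻¹ α) ∈ PosRoots n}

/-- The simple roots: `α_0 = e_1` and `α_a = e_{a+1} - e_a` for `a ≥ 1`. -/
def alphaRoot (a : ℕ) : ℤ → ℤ :=
  if a = 0 then eVec 1 else eVec ((a : ℤ) + 1) - eVec (a : ℤ)

/-- The reflection order of a word: `reflOrder L t = γ_{t+1} = s_{a_1} ⋯ s_{a_t} · α_{a_{t+1}}`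
(0-indexed). -/
def reflOrder (L : List ℕ) (t : ℕ) : ℤ → ℤ :=
  actB (wordProd (L.take t)) (alphaRoot (L.getD t 0))

/-- The trapezoid `Z(d,r) = (r+2d-1, r+2d-3, …, r+1)`. -/
def Zlam (d r : ℕ) : ℕ → ℕ := fun i => r + 2 * d + 1 - 2 * i

/-- The labeling `f : D(Z(d,r)) → Φ⁺`. -/
def fLabel (d r : ℕ) (p : ℤ × ℤ) : ℤ → ℤ :=
  if p.2 ≤ 0 then eVec ((d : ℤ) + 1 - p.1) - eVec p.2
  else if p.2 ≤ (r : ℤ) then eVec ((d : ℤ) + 1 - p.1) + eVec (p.2 + (d : ℤ))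
  else eVec ((d : ℤ) + 1 - p.1) - eVec (p.2 - (r : ℤ))

/-- The extended labeling `f̃`, with `f̃(i, i - d - 1) = 2 e_{d+1-i}`. -/
def fExtLabel (d r : ℕ) (p : ℤ × ℤ) : ℤ → ℤ :=
  if p.2 = p.1 - ((d : ℤ) + 1) then (2 : ℤ) • eVec ((d : ℤ) + 1 - p.1)
  else fLabel d r p

/-- `w` is the signed permutation `w^{(d,r)} ∈ W(B_{d+r})`, i.e.
`w(i) = d + i` for `1 ≤ i ≤ r` and `w(i) = -(i - r)` for `r < i ≤ d + r`. -/
def IsWdr (d r : ℕ) (w : Equiv.Perm ℤ) : Prop :=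
  IsSignedPerm (d + r) w ∧
    (∀ i : ℤ, 1 ≤ i → i ≤ (r : ℤ) → w i = (d : ℤ) + i) ∧
    (∀ i : ℤ, (r : ℤ) < i → i ≤ (d : ℤ) + (r : ℤ) → w i = -(i - r))


/-- `x` lies strictly between `y` and `z` (i.e. `min(y,z) < x < max(y,z)`). -/
def Between (x y z : ℕ) : Prop := (y < x ∧ x < z) ∨ (z < x ∧ x < y)

/-- A nonempty list is unimodal: strictly decreasing down to its minimum
(at 0-indexed position `k`), then strictly increasing. -/
def Unimodal (L : List ℕ) : Prop :=
  ∃ k : ℕ, k < L.length ∧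
    (∀ a b : ℕ, a < b → b ≤ k → L.getD b 0 < L.getD a 0) ∧
    (∀ a b : ℕ, k ≤ a → a < b → b < L.length → L.getD a 0 < L.getD b 0)

/-- Row `i` of the distinguished tableau of shape `Z(d,r)`:
`(r+d-i, …, r+1, 0, 1, …, r+d-i)`. -/
def rowWord (d r i : ℕ) : List ℕ :=
  (List.range (r + 2 * (d - i) + 1)).map fun t =>
    if t < d - i then r + (d - i) - t else t - (d - i)

/-- The reading word `π(T) = T_d T_{d-1} ⋯ T_1` of the distinguished tableau of
shape `Z(d,r)`. -/
def piWord (d r : ℕ) : List ℕ :=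
  (List.range d).flatMap fun k => rowWord d r (d - k)

/-- `μ_i = Z(d,r)_i - λ_i`. -/
def muF (d r : ℕ) (lam : ℕ → ℕ) (i : ℕ) : ℕ := r + 2 * d + 1 - 2 * i - lam i

/-- `σ_i = μ_1 + ⋯ + μ_i`. -/
def sigmaF (d r : ℕ) (lam : ℕ → ℕ) (i : ℕ) : ℕ := ∑ t ∈ Finset.Icc 1 i, muF d r lam t

/-- `ν_i = min{μ_i, …, μ_d}`. -/
noncomputable def nuF (d r : ℕ) (lam : ℕ → ℕ) (i : ℕ) : ℕ :=
  sInf {m : ℕ | ∃ j : ℕ, i ≤ j ∧ j ≤ d ∧ m = muF d r lam j}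

/-- The word `a^λ`: the concatenation over `i = 1, …, d` of the increasing runs
`(d+r-i-μ_i+1, …, d+r-i)`. -/
def aLamWord (d r : ℕ) (lam : ℕ → ℕ) : List ℕ :=
  (List.range d).flatMap fun k =>
    (List.range (muF d r lam (k + 1))).map fun t =>
      d + r - (k + 1) - muF d r lam (k + 1) + 1 + t

/-- Row `i` of the tableau `P(w^λ)`: entries `P(i,c) = c` for `c ≥ 0` and
`P(i,c) = r - c - ν_{d+1+c}` for `c < 0`. -/
noncomputable def rowWordP (d r : ℕ) (lam : ℕ → ℕ) (i : ℕ) : List ℕ :=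
  (List.range (lam i)).map fun t =>
    if t < d - i then r + (d - i) - t - nuF d r lam (i + 1 + t) else t - (d - i)

/-- The reading word `π(P(w^λ))`. -/
noncomputable def piWordP (d r : ℕ) (lam : ℕ → ℕ) : List ℕ :=
  (List.range d).flatMap fun k => rowWordP d r lam (d - k)

/-- The shape obtained from `λ` by adding one box at the end of row `i`. -/
def stepShape (lam : ℕ → ℕ) (i : ℕ) : ℕ → ℕ :=
  fun t => if t = i then lam i + 1 else lam t

/-- The box-adding map `f_i` on fillings: swap columns `j = λ_i + i - d` and `j + 1`
(in rows `1, …, i-1`), and put the value `N + 1` in the new box `(i, j)`. -/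
def addBox (d : ℕ) (lam : ℕ → ℕ) (i : ℕ) (N : ℕ) (B : ℤ × ℤ → ℕ) : ℤ × ℤ → ℕ :=
  fun p =>
    if p = ((i : ℤ), (lam i : ℤ) + (i : ℤ) - (d : ℤ)) then N + 1
    else if 1 ≤ p.1 ∧ p.1 < (i : ℤ) ∧ p.2 = (lam i : ℤ) + (i : ℤ) - (d : ℤ) then
      B (p.1, p.2 + 1)
    else if 1 ≤ p.1 ∧ p.1 < (i : ℤ) ∧ p.2 = (lam i : ℤ) + (i : ℤ) - (d : ℤ) + 1 then
      B (p.1, p.2 - 1)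
    else B p

/-- Successively apply the box-adding maps along a list of row indices,
tracking the current shape. -/
def FmapAux (d : ℕ) : List ℕ → (ℕ → ℕ) → (ℤ × ℤ → ℕ) → (ℤ × ℤ → ℕ)
  | [], _, B => B
  | i :: rest, lam, B => FmapAux d rest (stepShape lam i) (addBox d lam i (sizeP d lam) B)

/-- The shape after successively adding boxes along a list of row indices. -/
def shapeAux : List ℕ → (ℕ → ℕ) → (ℕ → ℕ)
  | [], lam => lam
  | i :: rest, lam => shapeAux rest (stepShape lam i)

/-- The list of row indices `1^{μ_1} 2^{μ_2} ⋯ d^{μ_d}` used to pad `λ` to `Z(d,r)`. -/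
def rowsList (d r : ℕ) (lam : ℕ → ℕ) : List ℕ :=
  (List.range d).flatMap fun k => List.replicate (muF d r lam (k + 1)) (k + 1)

/-- `BS(Z(d,r))|_λ`: balanced tableaux of shape `Z(d,r)` such that for each
`i ∈ {1,…,d}` the entries `N + σ_{i-1} + 1, …, N + σ_i` all occur in row `i`. -/
def BSRestricted (d r : ℕ) (lam : ℕ → ℕ) : Set (ℤ × ℤ → ℕ) :=
  {T | IsBalanced d (Zlam d r) T ∧ ∀ i : ℕ, 1 ≤ i → i ≤ d →
    ∀ k : ℕ, sizeP d lam + sigmaF d r lam (i - 1) + 1 ≤ k →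
      k ≤ sizeP d lam + sigmaF d r lam i →
      ∃ c : ℤ, ((i : ℤ), c) ∈ Diagram d (Zlam d r) ∧ T ((i : ℤ), c) = k}

/-- `w ∈ W(B_n)` pattern embeds the signed pattern `v` (given as its one-line
notation, a list of nonzero integers). -/
def PatternEmbeds (n : ℕ) (w : Equiv.Perm ℤ) (v : List ℤ) : Prop :=
  ∃ idx : Fin v.length → ℤ, StrictMono idx ∧
    (∀ j, 1 ≤ idx j ∧ idx j ≤ (n : ℤ)) ∧
    (∀ j, 0 < w (idx j) ↔ 0 < v.get j) ∧
    (∀ j k, |w (idx j)| < |w (idx k)| ↔ |v.get j| < |v.get k|)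

/-!
Encode the root `e_p - e_q` by the pair `(p, q)`; it is an inversion of `w` when `q < p` but `p`
precedes `q` in one-line notation. If `p` and `q` enclose `k` indices in one-line notation, being
balanced means that the arm and leg of `(p, q)` together contain exactly `k` larger labels. By
counting, some enclosed index has no larger label in arm or leg if and only if another one has a
larger label in both.

Suppose the inversions of `v` are those of `w` with label at most `m`, and `(p, q)` has label
`m + 1`. An index separating `p` and `q` in one-line notation of `v` would contradict this
dichotomy at `(p, q)` or at a neighbouring hook, so `p` and `q` are adjacent in `v`, and
multiplying `v` on the right by a simple reflection adds the inversion `(p, q)`. Thus the labels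
list the reflection order of a reduced word, which is unique because its letters can be read off
from the reflections.

The labeling `f` matches the boxes of `Z(d,r)` with the inversions of `w^{(d,r)}` and the extended
hooks with arms and legs, the added boxes standing for the roots `2 e_p`; moreover
`rk = w⁻¹ q - w⁻¹ p = k + 1`.
-/

section Inversions

/-- The root `e_p - e_q` (with `q < p`) is unchanged under `(p, q) ↦ (-q, -p)`, and `(p, -p)`
encodes `2 e_p`, which we identify with `e_p`. `normalForm p q` is the pair `(a, b)` with `|b| < a`
encoding the same root. -/
def normalForm (p q : ℤ) : ℤ × ℤ :=
  if q = -p then (p, 0) else if -p < q then (p, q) else (-q, -p)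

/-- The inversions of `w`, the root `e_p - e_q` being encoded by the pair `(p, q)` with
`|q| < p`. -/
def inversions (w : Equiv.Perm ℤ) : Set (ℤ × ℤ) :=
  {z | -z.1 < z.2 ∧ z.2 < z.1 ∧ w⁻¹ z.1 < w⁻¹ z.2}

/-- The indices `c` lying strictly between `p` and `q` in one-line notation of `w`. Those with
`c < p` are the arm of `(p, q)`, carrying the roots `e_p - e_c`; those with `q < c` are the leg,
carrying the roots `e_c - e_q`. -/
noncomputable def hookIndices (w : Equiv.Perm ℤ) (p q : ℤ) : Finset ℤ :=
  (Finset.Ioo (w⁻¹ p) (w⁻¹ q)).map w.toEmbedding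

/-- The hook of `(p, q)` is balanced: in its arm and leg together, as many labels exceed the
corner label as there are indices in `hookIndices w p q`. -/
def HookBalanced (w : Equiv.Perm ℤ) (F : ℤ × ℤ → ℕ) (p q : ℤ) : Prop :=
  ((hookIndices w p q).filter fun c => c < p ∧ F (normalForm p q) < F (normalForm p c)).card +
    ((hookIndices w p q).filter fun c => q < c ∧ F (normalForm p q) < F (normalForm c q)).card =
      (hookIndices w p q).card

/-- `F` numbers the inversions of `w` from `1` to `N` with all hooks balanced. -/
structure IsBalancedLabeling (w : Equiv.Perm ℤ) (N : ℕ) (F : ℤ × ℤ → ℕ) : Prop where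
  bijOn : Set.BijOn F (inversions w) (Set.Icc 1 N)
  hookBalanced : ∀ p q, (p, q) ∈ inversions w → HookBalanced w F p q

/-- `v` has exactly those inversions of `w` whose label is at most `m`. -/
def HasInversionsUpTo (w : Equiv.Perm ℤ) (F : ℤ × ℤ → ℕ) (m : ℕ) (v : Equiv.Perm ℤ) : Prop :=
  ∀ p q, q < p → (v⁻¹ p < v⁻¹ q ↔ w⁻¹ p < w⁻¹ q ∧ F (normalForm p q) ≤ m)

variable {n m N : ℕ} {v w : Equiv.Perm ℤ} {F : ℤ × ℤ → ℕ} {a b p q : ℤ}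

lemma IsSignedPerm.mul (hv : IsSignedPerm n v) (hw : IsSignedPerm n w) : IsSignedPerm n (v * w) :=
  ⟨fun i => by simp only [Equiv.Perm.mul_apply, hw.1, hv.1],
    fun i hi => by simp only [Equiv.Perm.mul_apply, hw.2 i hi, hv.2 i hi]⟩

lemma IsSignedPerm.inv (hw : IsSignedPerm n w) : IsSignedPerm n w⁻¹ :=
  ⟨fun i => by rw [Equiv.Perm.inv_eq_iff_eq, hw.1, Equiv.Perm.inv_def, Equiv.apply_symm_apply],
    fun i hi => by rw [Equiv.Perm.inv_eq_iff_eq, hw.2 i hi]⟩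

lemma IsSignedPerm.apply_zero (hw : IsSignedPerm n w) : w 0 = 0 := by
  have := hw.1 0
  rw [neg_zero] at this
  omega

lemma IsSignedPerm.abs_apply_le (hw : IsSignedPerm n w) {i : ℤ} (hi : |i| ≤ n) : |w i| ≤ n := by
  by_contra! h
  rw [w.injective (hw.2 _ h)] at h
  exact h.not_ge hi

lemma normalForm_of_lt (h : -p < q) : normalForm p q = (p, q) := by
  rw [normalForm, if_neg (by omega), if_pos h]

lemma normalForm_neg_neg (h : q < p) : normalForm (-q) (-p) = normalForm p q := by
  unfold normalForm
  split_ifs <;> simp only [Prod.mk.injEq, and_true, true_and] <;> omega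

lemma normalForm_eq_iff (h₁ : -a < b) (h₂ : b < a) : normalForm p q = (a, b) ↔
    (p = a ∧ q = b) ∨ (p = -b ∧ q = -a) ∨ (b = 0 ∧ p = a ∧ q = -a) := by
  unfold normalForm
  split_ifs <;> simp only [Prod.mk.injEq] <;> omega

lemma normalForm_mem_inversions_iff (hw : IsSignedPerm n w) (hqp : q < p) :
    normalForm p q ∈ inversions w ↔ w⁻¹ p < w⁻¹ q := by
  have hodd := hw.inv.1
  unfold normalForm
  split_ifs with h₁ h₂
  · simp only [inversions, Set.mem_ofPred_eq, h₁, hodd, hw.inv.apply_zero]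
    omega
  · simp only [inversions, Set.mem_ofPred_eq, h₂, hqp, true_and]
  · simp only [inversions, Set.mem_ofPred_eq, hodd]
    omega

lemma mem_hookIndices {c : ℤ} : c ∈ hookIndices w p q ↔ w⁻¹ p < w⁻¹ c ∧ w⁻¹ c < w⁻¹ q := by
  rw [hookIndices, Finset.mem_map_equiv, Finset.mem_Ioo]
  rfl

lemma card_hookIndices (h : w⁻¹ p < w⁻¹ q) :
    ((hookIndices w p q).card : ℤ) = w⁻¹ q - w⁻¹ p - 1 := by
  rw [hookIndices, Finset.card_map, Int.card_Ioo]
  omega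

lemma HookBalanced.exists_iff (h : HookBalanced w F p q) :
    (∃ c ∈ hookIndices w p q, (c < p → F (normalForm p c) ≤ F (normalForm p q)) ∧
        (q < c → F (normalForm c q) ≤ F (normalForm p q))) ↔
      ∃ c ∈ hookIndices w p q, (c < p ∧ F (normalForm p q) < F (normalForm p c)) ∧
        (q < c ∧ F (normalForm p q) < F (normalForm c q)) := by
  set arm := (hookIndices w p q).filter fun c => c < p ∧ F (normalForm p q) < F (normalForm p c)
  set leg := (hookIndices w p q).filter fun c => q < c ∧ F (normalForm p q) < F (normalForm c q)
  have hcover : hookIndices w p q ⊆ arm ∪ leg ↔ Disjoint arm leg := by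
    have hsub : arm ∪ leg ⊆ hookIndices w p q :=
      Finset.union_subset (Finset.filter_subset _ _) (Finset.filter_subset _ _)
    rw [← Finset.card_union_eq_card_add_card, show arm.card + leg.card = _ from h]
    exact ⟨fun hs => congrArg _ (hsub.antisymm hs),
      fun hc => (Finset.eq_of_subset_of_card_le hsub hc.ge).ge⟩
  have hleft : (∃ c ∈ hookIndices w p q, (c < p → F (normalForm p c) ≤ F (normalForm p q)) ∧
      (q < c → F (normalForm c q) ≤ F (normalForm p q))) ↔ ¬ hookIndices w p q ⊆ arm ∪ leg := by
    simp only [Finset.not_subset, Finset.mem_union, arm, leg, Finset.mem_filter]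
    exact exists_congr fun c => and_congr_right fun hc => by
      simp only [hc, true_and, not_or, not_and, not_lt]
  rw [hleft, hcover, Finset.not_disjoint_iff]
  simp only [arm, leg, Finset.mem_filter]
  exact exists_congr fun c => by tauto

lemma HookBalanced.neg (hw : IsSignedPerm n w) (hqp : q < p) (h : HookBalanced w F p q) :
    HookBalanced w F (-q) (-p) := by
  have hindices : hookIndices w (-q) (-p) = (hookIndices w p q).map (Equiv.neg ℤ).toEmbedding := by
    ext c
    rw [Finset.mem_map_equiv, mem_hookIndices, mem_hookIndices]
    simp only [Equiv.neg_symm, Equiv.neg_apply, hw.inv.1]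
    omega
  unfold HookBalanced at h ⊢
  rw [hindices, Finset.filter_map, Finset.filter_map, Finset.card_map, Finset.card_map,
    Finset.card_map, ← h, add_comm, normalForm_neg_neg hqp]
  congr 2 <;> apply Finset.filter_congr <;> intro c _ <;>
    simp only [Function.comp_apply, Equiv.coe_toEmbedding, Equiv.neg_apply, neg_lt_neg_iff] <;>
    refine and_congr_right fun hc => ?_ <;> rw [normalForm_neg_neg hc]

lemma IsBalancedLabeling.hookBalanced_of_ne (hF : IsBalancedLabeling w N F) (hw : IsSignedPerm n w)
    (hqp : q < p) (hinv : w⁻¹ p < w⁻¹ q) (hne : q ≠ -p) : HookBalanced w F p q := by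
  have hmem := (normalForm_mem_inversions_iff hw hqp).2 hinv
  rcases lt_or_gt_of_ne hne with hlt | hgt
  · rw [normalForm, if_neg hne, if_neg hlt.not_gt] at hmem
    simpa only [neg_neg] using (hF.hookBalanced _ _ hmem).neg hw (neg_lt_neg hqp)
  · rw [normalForm_of_lt hgt] at hmem
    exact hF.hookBalanced _ _ hmem

lemma IsBalancedLabeling.eq_of_apply_normalForm_eq (hF : IsBalancedLabeling w N F)
    (hw : IsSignedPerm n w) (hab : (a, b) ∈ inversions w) (hqp : q < p) (hinv : w⁻¹ p < w⁻¹ q)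
    (heq : F (normalForm p q) = F (a, b)) :
    (p = a ∧ q = b) ∨ (p = -b ∧ q = -a) ∨ (b = 0 ∧ p = a ∧ q = -a) :=
  (normalForm_eq_iff hab.1 hab.2.1).1
    (hF.bijOn.injOn ((normalForm_mem_inversions_iff hw hqp).2 hinv) hab heq)

lemma HasInversionsUpTo.inv_lt_inv (hv : HasInversionsUpTo w F m v) (hinv : w⁻¹ p < w⁻¹ q)
    (hle : q < p → F (normalForm p q) ≤ m) : v⁻¹ p < v⁻¹ q := by
  rcases lt_trichotomy p q with hpq | rfl | hqp
  · have hnot : ¬ v⁻¹ q < v⁻¹ p := fun h => ((hv q p hpq).1 h).1.not_gt hinv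
    exact lt_of_le_of_ne (not_lt.1 hnot) (v⁻¹.injective.ne hpq.ne)
  · exact absurd hinv (lt_irrefl _)
  · exact (hv p q hqp).2 ⟨hinv, hle hqp⟩

lemma HasInversionsUpTo.not_between_of_mem_hook (hv : HasInversionsUpTo w F m v)
    (hw : IsSignedPerm n w) (hF : IsBalancedLabeling w N F) (hab : (a, b) ∈ inversions w)
    (hlabel : F (a, b) = m + 1) {c : ℤ} (hbc : b < c) (hca : c < a) (hac' : w⁻¹ a < w⁻¹ c)
    (hcb' : w⁻¹ c < w⁻¹ b) : ¬ (v⁻¹ b < v⁻¹ c ∧ v⁻¹ c < v⁻¹ a) := by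
  rintro ⟨hbc_v, hca_v⟩
  have ⟨hneg, hba, _⟩ := hab
  have hlabel' : F (normalForm a b) = m + 1 := by rw [normalForm_of_lt hneg, hlabel]
  have harm : F (normalForm a b) < F (normalForm a c) := by
    have hgt : ¬ F (normalForm a c) ≤ m := fun h => hca_v.not_gt (hv.inv_lt_inv hac' fun _ => h)
    have := hF.eq_of_apply_normalForm_eq hw hab hca hac'
    omega
  have hleg : F (normalForm a b) < F (normalForm c b) := by
    have hgt : ¬ F (normalForm c b) ≤ m := fun h => hbc_v.not_gt (hv.inv_lt_inv hcb' fun _ => h)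
    have := hF.eq_of_apply_normalForm_eq hw hab hbc hcb'
    omega
  obtain ⟨e, he, hae, heb⟩ := (hF.hookBalanced a b hab).exists_iff.2
    ⟨c, mem_hookIndices.2 ⟨hac', hcb'⟩, ⟨hca, harm⟩, hbc, hleg⟩
  obtain ⟨hae', heb'⟩ := mem_hookIndices.1 he
  have hne : ¬ (b = 0 ∧ e = -a) := by
    rintro ⟨rfl, rfl⟩
    rw [hw.inv.1] at hae' heb'
    rw [hw.inv.apply_zero] at heb'
    omega
  have hae_v : v⁻¹ a < v⁻¹ e := hv.inv_lt_inv hae' fun hea => by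
    have := hF.eq_of_apply_normalForm_eq hw hab hea hae'
    have := hae hea
    have : e ≠ b := fun h => (h ▸ heb').false
    omega
  have heb_v : v⁻¹ e < v⁻¹ b := hv.inv_lt_inv heb' fun hbe => by
    have := hF.eq_of_apply_normalForm_eq hw hab hbe heb'
    have := heb hbe
    have : e ≠ a := fun h => (h ▸ hae').false
    omega
  omega

lemma HasInversionsUpTo.not_between_of_lt (hv : HasInversionsUpTo w F m v) (hvs : IsSignedPerm n v)
    (hw : IsSignedPerm n w) (hF : IsBalancedLabeling w N F) (hqp : q < p)
    (hinv : w⁻¹ p < w⁻¹ q) (hlabel : F (normalForm p q) = m + 1)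
    (hmid : ∀ c, q < c → c < p → w⁻¹ p < w⁻¹ c → w⁻¹ c < w⁻¹ q → ¬ (v⁻¹ q < v⁻¹ c ∧ v⁻¹ c < v⁻¹ p))
    (c : ℤ) (hcp : c < p) (hqc' : w⁻¹ q < w⁻¹ c) : ¬ (v⁻¹ q < v⁻¹ c ∧ v⁻¹ c < v⁻¹ p) := by
  -- The hook of `(p, c)` yields another violation `e` with `c < e < p`, so we descend on `p - c`.
  rintro ⟨hqc, hcp_v⟩
  have hpc : m < F (normalForm p c) := by
    by_contra! hle
    exact hcp_v.not_gt (hv.inv_lt_inv (hinv.trans hqc') fun _ => hle)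
  obtain ⟨e, hce, hep, hpe', hce_v, hep_v⟩ : ∃ e, c < e ∧ e < p ∧ w⁻¹ p < w⁻¹ e ∧
      v⁻¹ c < v⁻¹ e ∧ v⁻¹ e < v⁻¹ p := by
    by_cases hneg : c = -p
    · subst hneg
      have := hvs.inv.1 p
      have := hw.inv.1 p
      refine ⟨0, ?_⟩
      rw [hvs.inv.apply_zero, hw.inv.apply_zero]
      omega
    · obtain ⟨e, he, ⟨hep, hpe⟩, hce, hec⟩ :=
        (hF.hookBalanced_of_ne hw hcp (hinv.trans hqc') hneg).exists_iff.1
          ⟨q, mem_hookIndices.2 ⟨hinv, hqc'⟩, fun _ => by omega,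
            fun hcq => (((hv q c hcq).1 hqc).2.trans hpc.le)⟩
      have hpe' := (mem_hookIndices.1 he).1
      refine ⟨e, hce, hep, hpe', ?_, ?_⟩
      · have := (hv e c hce).1.mt (by omega)
        exact lt_of_le_of_ne (not_lt.1 this) (v⁻¹.injective.ne hce.ne)
      · have := (hv p e hep).1.mt (by omega)
        exact lt_of_le_of_ne (not_lt.1 this) (v⁻¹.injective.ne hep.ne)
  have hqe_v := hqc.trans hce_v
  have hqe' : w⁻¹ q < w⁻¹ e := by
    rcases lt_trichotomy e q with heq | rfl | hqe
    · exact ((hv q e heq).1 hqe_v).1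
    · exact absurd hqe_v (lt_irrefl _)
    · by_contra! hle
      exact hmid e hqe hep hpe' (lt_of_le_of_ne hle (w⁻¹.injective.ne hqe.ne')) ⟨hqe_v, hep_v⟩
  exact not_between_of_lt hv hvs hw hF hqp hinv hlabel hmid e hep hqe' ⟨hqe_v, hep_v⟩
termination_by (p - c).toNat

lemma HasInversionsUpTo.not_between (hv : HasInversionsUpTo w F m v)
    (hvs : IsSignedPerm n v) (hw : IsSignedPerm n w) (hF : IsBalancedLabeling w N F)
    (hab : (a, b) ∈ inversions w) (hlabel : F (a, b) = m + 1)
    (c : ℤ) : ¬ (v⁻¹ b < v⁻¹ c ∧ v⁻¹ c < v⁻¹ a) := by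
  have ⟨hneg, hba, hinv⟩ := hab
  have hmid := fun c => hv.not_between_of_mem_hook (c := c) hw hF hab hlabel
  have hlabel' : F (normalForm a b) = m + 1 := by rw [normalForm_of_lt hneg, hlabel]
  have hbelow := hv.not_between_of_lt hvs hw hF hba hinv hlabel' hmid
  have habove : ∀ c, b < c → w⁻¹ c < w⁻¹ a → ¬ (v⁻¹ b < v⁻¹ c ∧ v⁻¹ c < v⁻¹ a) := by
    intro c hbc hca' ⟨hbc_v, hca_v⟩
    refine hv.not_between_of_lt hvs hw hF (neg_lt_neg hba) ?_ ?_ (fun e he₁ he₂ he₃ he₄ he => ?_)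
      (-c) (neg_lt_neg hbc) ?_ ⟨?_, ?_⟩
    · simpa only [hw.inv.1, neg_lt_neg_iff] using hinv
    · rw [normalForm_neg_neg hba, hlabel']
    · have := hw.inv.1
      have := hvs.inv.1
      refine hmid (-e) ?_ ?_ ?_ ?_ ⟨?_, ?_⟩ <;> grind
    all_goals simpa only [hw.inv.1, hvs.inv.1, neg_lt_neg_iff]
  rintro ⟨hbc_v, hca_v⟩
  have hca : c < a := by
    by_contra! hac
    have hac : a < c := lt_of_le_of_ne hac fun h => (h ▸ hca_v).false
    exact habove c (hba.trans hac) ((hv c a hac).1 hca_v).1 ⟨hbc_v, hca_v⟩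
  have hbc : b < c := by
    by_contra! hcb
    have hcb : c < b := lt_of_le_of_ne hcb fun h => (h ▸ hbc_v).false
    exact hbelow c hca ((hv b c hcb).1 hbc_v).1 ⟨hbc_v, hca_v⟩
  refine hmid c hbc hca ?_ ?_ ⟨hbc_v, hca_v⟩ <;> refine lt_of_le_of_ne (not_lt.1 fun h => ?_)
    (w⁻¹.injective.ne (by omega))
  · exact habove c hbc h ⟨hbc_v, hca_v⟩
  · exact hbelow c hca h ⟨hbc_v, hca_v⟩

lemma HasInversionsUpTo.inv_apply_eq_add_one (hv : HasInversionsUpTo w F m v)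
    (hvs : IsSignedPerm n v) (hw : IsSignedPerm n w) (hF : IsBalancedLabeling w N F)
    (hab : (a, b) ∈ inversions w) (hlabel : F (a, b) = m + 1) :
    v⁻¹ a = v⁻¹ b + 1 := by
  have hlt : v⁻¹ b < v⁻¹ a := by
    have := (hv a b hab.2.1).1.mt (by rw [normalForm_of_lt hab.1, hlabel]; omega)
    exact lt_of_le_of_ne (not_lt.1 this) (v⁻¹.injective.ne hab.2.1.ne)
  have := hv.not_between hvs hw hF hab hlabel (v (v⁻¹ b + 1))
  rw [Equiv.Perm.inv_def, Equiv.symm_apply_apply, ← Equiv.Perm.inv_def] at this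
  omega

end Inversions

section ReflectionOrder

variable {n m N k t : ℕ} {L L' : List ℕ} {u v w : Equiv.Perm ℤ} {F : ℤ × ℤ → ℕ}
  {a b c e p q y z : ℤ}

lemma sB_apply (k : ℕ) (z : ℤ) : sB k z =
    if k = 0 then (if z = 1 then -1 else if z = -1 then 1 else z)
    else if z = k then k + 1 else if z = k + 1 then k else if z = -k then -k - 1
    else if z = -k - 1 then -k else z := by
  unfold sB
  by_cases hk : k = 0
  · simp only [hk, if_true, Equiv.swap_apply_def]
  · simp only [hk, if_false, Equiv.Perm.mul_apply, Equiv.swap_apply_def]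
    split_ifs <;> omega

lemma sB_inv (k : ℕ) : (sB k)⁻¹ = sB k := by
  refine inv_eq_of_mul_eq_one_right (Equiv.ext fun z => ?_)
  have h := sB_apply k z
  rw [Equiv.Perm.mul_apply, Equiv.Perm.one_apply]
  generalize sB k z = y at h ⊢
  rw [sB_apply]
  split_ifs at h ⊢ <;> omega

lemma sB_lt_sB_iff : sB k y < sB k z ↔
    (y < z ∧ normalForm z y ≠ ((k : ℤ) + 1, (k : ℤ))) ∨
      normalForm y z = ((k : ℤ) + 1, (k : ℤ)) := by
  simp only [Ne, normalForm_eq_iff (show -((k : ℤ) + 1) < k by omega) (lt_add_one _), sB_apply]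
  split_ifs <;> omega

lemma isSignedPerm_sB (hk : k < n) : IsSignedPerm n (sB k) := by
  refine ⟨fun i => ?_, fun i hi => ?_⟩
  · simp only [sB_apply]
    split_ifs <;> omega
  · rw [lt_abs] at hi
    rw [sB_apply]
    split_ifs <;> omega

lemma wordProd_append_singleton (L : List ℕ) (k : ℕ) : wordProd (L ++ [k]) = wordProd L * sB k := by
  rw [wordProd, wordProd, List.map_append, List.prod_append, List.map_singleton,
    List.prod_singleton]

lemma isSignedPerm_wordProd (h : ∀ k ∈ L, k < n) : IsSignedPerm n (wordProd L) := by
  induction L with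
  | nil => exact ⟨fun _ => rfl, fun _ _ => rfl⟩
  | cons k L ih =>
    rw [List.forall_mem_cons] at h
    exact (isSignedPerm_sB h.1).mul (ih h.2)

lemma eVec_zero : eVec 0 = 0 := by
  funext t
  simp only [eVec, Pi.zero_apply]
  split_ifs <;> omega

lemma eVec_neg (i : ℤ) : eVec (-i) = -eVec i := by
  funext t
  simp only [eVec, Pi.neg_apply]
  split_ifs <;> omega

lemma alphaRoot_eq (k : ℕ) : alphaRoot k = eVec (k + 1) - eVec k := by
  rw [alphaRoot]
  split_ifs with hk
  · rw [hk, Nat.cast_zero, zero_add, eVec_zero, sub_zero]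
  · rfl

lemma alphaRoot_injective : Function.Injective alphaRoot := by
  intro k l h
  have h := congrFun h (k + 1)
  simp only [alphaRoot_eq, eVec, Pi.sub_apply] at h
  split_ifs at h <;> omega

lemma eVec_normalForm_sub (h : q ≠ -p) :
    eVec (normalForm p q).1 - eVec (normalForm p q).2 = eVec p - eVec q := by
  unfold normalForm
  rw [if_neg h]
  split_ifs
  · rfl
  · rw [eVec_neg, eVec_neg, neg_sub_neg]

lemma actB_injective (w : Equiv.Perm ℤ) : Function.Injective (actB w) :=
  w⁻¹.surjective.injective_comp_right

lemma actB_eVec (hw : IsSignedPerm n w) (i : ℤ) : actB w (eVec i) = eVec (w i) := by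
  funext t
  simp only [actB, eVec, Equiv.Perm.inv_eq_iff_eq, hw.apply_zero, hw.1]

lemma reflOrder_append_singleton_of_lt (h : t < L.length) :
    reflOrder (L ++ [k]) t = reflOrder L t := by
  rw [reflOrder, reflOrder, List.take_append_of_le_length h.le, List.getD_append _ _ _ _ h]

lemma reflOrder_append_singleton_length :
    reflOrder (L ++ [k]) L.length = actB (wordProd L) (alphaRoot k) := by
  rw [reflOrder, List.take_left, List.getD_append_right _ _ _ _ le_rfl, Nat.sub_self]
  rfl

lemma eq_of_reflOrder_eq (hlen : L.length = L'.length)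
    (h : ∀ t < L.length, reflOrder L t = reflOrder L' t) : L = L' := by
  have htake : ∀ t ≤ L.length, L.take t = L'.take t := by
    intro t ht
    induction t with
    | zero => rfl
    | succ t ih =>
      have hprefix := ih (by omega)
      have hletter := h t (by omega)
      rw [reflOrder, reflOrder, hprefix] at hletter
      have hletter := alphaRoot_injective (actB_injective _ hletter)
      rw [List.getD_eq_getElem _ _ (by omega), List.getD_eq_getElem _ _ (by omega)] at hletter
      rw [List.take_succ_eq_append_getElem (by omega), List.take_succ_eq_append_getElem (by omega),
        hprefix, hletter]
  rw [← L.take_length, htake _ le_rfl, hlen, L'.take_length]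

lemma normalForm_apply_eq_iff (hu : ∀ i, u (-i) = -u i) (hab : -a < b) (hba : b < a)
    (hce : -c < e) (hec : e < c) (h : normalForm (u a) (u b) = (c, e)) :
    normalForm (u p) (u q) = (c, e) ↔ normalForm p q = (a, b) := by
  have hzero : ∀ i, u i = 0 ↔ i = 0 := fun i => u.injective.eq_iff' (by
    have := hu 0
    rw [neg_zero] at this
    omega)
  rw [normalForm_eq_iff hce hec, normalForm_eq_iff hab hba]
  rcases (normalForm_eq_iff hce hec).1 h with ⟨rfl, rfl⟩ | ⟨ha, hb⟩ | ⟨-, ha, hb⟩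
  · simp only [← hu, u.injective.eq_iff, hzero]
  · obtain rfl : c = u (-b) := by rw [hu, hb, neg_neg]
    obtain rfl : e = u (-a) := by rw [hu, ha, neg_neg]
    have := (hzero (-b)).2
    simp only [← hu, neg_neg, u.injective.eq_iff, hzero]
    omega
  · rw [← ha, ← hu] at hb
    have := u.injective hb
    omega

lemma inversions_mul_sB_subset (hv : IsSignedPerm n v) (k : ℕ) :
    inversions (v * sB k) ⊆ insert (normalForm (v (k + 1)) (v k)) (inversions v) := by
  rintro ⟨a, b⟩ ⟨hneg : -a < b, hba : b < a, hinv : (v * sB k)⁻¹ a < (v * sB k)⁻¹ b⟩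
  rw [mul_inv_rev, sB_inv, Equiv.Perm.mul_apply, Equiv.Perm.mul_apply,
    sB_lt_sB_iff] at hinv
  rcases hinv with ⟨hlt, -⟩ | hnf
  · exact Or.inr ⟨hneg, hba, hlt⟩
  · left
    rw [← normalForm_of_lt hneg]
    rcases (normalForm_eq_iff (by omega) (lt_add_one _)).1 hnf with
      ⟨ha, hb⟩ | ⟨ha, hb⟩ | ⟨-, ha, hb⟩
    · rw [← ha, ← hb, Equiv.Perm.inv_def, Equiv.apply_symm_apply, Equiv.apply_symm_apply]
    · rw [← normalForm_neg_neg hba, Equiv.Perm.inv_eq_iff_eq.1 ha, Equiv.Perm.inv_eq_iff_eq.1 hb,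
        hv.1, hv.1, neg_neg, neg_neg]
    · rw [← ha, ← hv.inv.1] at hb
      have := v⁻¹.injective hb
      omega

lemma encard_inversions_wordProd_le (h : ∀ k ∈ L, k < n) :
    (inversions (wordProd L)).encard ≤ L.length := by
  induction L using List.reverseRecOn with
  | nil =>
    rw [show inversions (wordProd []) = ∅ from Set.eq_empty_of_forall_notMem fun z hz =>
      hz.2.1.not_gt hz.2.2, Set.encard_empty]
    exact bot_le
  | append_singleton L k ih =>
    rw [List.forall_mem_append, List.forall_mem_singleton] at h
    rw [wordProd_append_singleton, List.length_append, List.length_singleton, Nat.cast_add]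
    calc _ ≤ _ := Set.encard_le_encard (inversions_mul_sB_subset (isSignedPerm_wordProd h.1) k)
      _ ≤ _ := Set.encard_insert_le _ _
      _ ≤ _ := add_le_add_left (ih h.1) _

lemma eq_one_of_strictMono (hu : StrictMono u) (hzero : u 0 = 0) : u = 1 := by
  have hsucc : ∀ i, u (i + 1) = u i + 1 := fun i => by
    simpa only [Order.succ_eq_add_one, StrictMono.coe_orderIsoOfSurjective] using
      (hu.orderIsoOfSurjective u u.surjective).map_succ i
  refine Equiv.ext fun i => ?_
  rw [Equiv.Perm.one_apply]
  induction i using Int.induction_on with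
  | zero => exact hzero
  | succ i ih => rw [hsucc, ih]
  | pred i ih =>
    have := hsucc (-i - 1)
    rw [sub_add_cancel] at this
    omega

lemma IsSignedPerm.eq_of_inv_lt_inv_iff (hv : IsSignedPerm n v) (hw : IsSignedPerm n w)
    (h : ∀ p q, q < p → (v⁻¹ p < v⁻¹ q ↔ w⁻¹ p < w⁻¹ q)) : v = w := by
  refine inv_mul_eq_one.1 (eq_one_of_strictMono (fun i j hij => ?_) (hv.inv.mul hw).apply_zero)
  have hi : w⁻¹ (w i) = i := w.symm_apply_apply i
  have hj : w⁻¹ (w j) = j := w.symm_apply_apply j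
  rw [Equiv.Perm.mul_apply, Equiv.Perm.mul_apply]
  rcases lt_or_gt_of_ne (w.injective.ne hij.ne) with hlt | hgt
  · have := (h _ _ hlt).not
    rw [hi, hj] at this
    exact lt_of_le_of_ne (not_lt.1 (this.2 hij.not_gt)) (v⁻¹.injective.ne hlt.ne)
  · have := h _ _ hgt
    rw [hi, hj] at this
    exact this.2 hij

lemma le_of_mem_inversions (hw : IsSignedPerm n w) (hab : (a, b) ∈ inversions w) : a ≤ n := by
  obtain ⟨-, hba : b < a, hinv : w⁻¹ a < w⁻¹ b⟩ := hab
  by_contra! hna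
  rw [hw.inv.2 a (hna.trans_le (le_abs_self a))] at hinv
  by_cases hb : |b| ≤ n
  · exact (hinv.trans_le (le_of_abs_le (hw.inv.abs_apply_le hb))).not_gt hna
  · rw [hw.inv.2 b (not_le.1 hb)] at hinv
    exact hinv.not_gt hba

lemma HasInversionsUpTo.mul_sB (hv : HasInversionsUpTo w F m v) (hvs : IsSignedPerm n v)
    (hw : IsSignedPerm n w) (hF : IsBalancedLabeling w N F) (hab : (a, b) ∈ inversions w)
    (hlabel : F (a, b) = m + 1) (hk : normalForm (v⁻¹ a) (v⁻¹ b) = ((k : ℤ) + 1, (k : ℤ))) :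
    HasInversionsUpTo w F (m + 1) (v * sB k) := by
  intro p q hqp
  have hroot : ∀ p q, normalForm (v⁻¹ p) (v⁻¹ q) = ((k : ℤ) + 1, (k : ℤ)) ↔
      normalForm p q = (a, b) := fun p q =>
    normalForm_apply_eq_iff hvs.inv.1 hab.1 hab.2.1 (by omega) (lt_add_one _) hk
  have hnot : normalForm q p ≠ (a, b) := by
    have ⟨hneg, hba, _⟩ := hab
    rw [Ne, normalForm_eq_iff hneg hba]
    omega
  have hinj : w⁻¹ p < w⁻¹ q → (F (normalForm p q) = m + 1 ↔ normalForm p q = (a, b)) := fun h =>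
    hlabel ▸ hF.bijOn.injOn.eq_iff ((normalForm_mem_inversions_iff hw hqp).2 h) hab
  have hinv : normalForm p q = (a, b) → w⁻¹ p < w⁻¹ q := fun h =>
    (normalForm_mem_inversions_iff hw hqp).1 (h ▸ hab)
  rw [mul_inv_rev, sB_inv, Equiv.Perm.mul_apply, Equiv.Perm.mul_apply, sB_lt_sB_iff, Ne, hroot,
    hroot, hv p q hqp, Nat.le_succ_iff]
  tauto

lemma exists_normalForm_eq (hb : -(n : ℤ) ≤ b) (ha : b + 1 ≤ n) :
    ∃ k < n, normalForm (b + 1) b = ((k : ℤ) + 1, (k : ℤ)) := by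
  rcases le_or_gt 0 b with hnonneg | hneg
  · lift b to ℕ using hnonneg
    exact ⟨b, by omega, normalForm_of_lt (by omega)⟩
  · refine ⟨(-(b + 1)).toNat, by omega, ?_⟩
    rw [normalForm_eq_iff (by omega) (by omega)]
    omega

lemma HasInversionsUpTo.exists_letter (hv : HasInversionsUpTo w F m v) (hvs : IsSignedPerm n v)
    (hw : IsSignedPerm n w) (hF : IsBalancedLabeling w N F) (hab : (a, b) ∈ inversions w)
    (hlabel : F (a, b) = m + 1) :
    ∃ k < n, normalForm (v⁻¹ a) (v⁻¹ b) = ((k : ℤ) + 1, (k : ℤ)) := by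
  have hadj := hv.inv_apply_eq_add_one hvs hw hF hab hlabel
  have hle := le_of_mem_inversions hw hab
  have ⟨hneg, hba, _⟩ := hab
  have ha := hvs.inv.abs_apply_le (abs_le.2 ⟨by omega, hle⟩)
  have hb := hvs.inv.abs_apply_le (i := b) (n := n) (abs_le.2 (by constructor <;> omega))
  rw [hadj] at ha ⊢
  exact exists_normalForm_eq (neg_le_of_abs_le hb) (le_of_abs_le ha)

lemma actB_alphaRoot (hv : IsSignedPerm n v) (hneg : b ≠ -a)
    (hk : normalForm (v⁻¹ a) (v⁻¹ b) = ((k : ℤ) + 1, (k : ℤ))) :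
    actB v (alphaRoot k) = eVec a - eVec b := by
  have hne : v⁻¹ b ≠ -v⁻¹ a := by
    rw [← hv.inv.1]
    exact v⁻¹.injective.ne hneg
  have happly : ∀ i, v (v⁻¹ i) = i := v.apply_symm_apply
  have hroot := eVec_normalForm_sub hne
  rw [hk] at hroot
  rw [alphaRoot_eq, hroot]
  change actB v (eVec (v⁻¹ a)) - actB v (eVec (v⁻¹ b)) = _
  rw [actB_eVec hv, actB_eVec hv, happly, happly]

lemma IsBalancedLabeling.exists_wordProd_hasInversionsUpTo (hF : IsBalancedLabeling w N F)
    (hw : IsSignedPerm n w) (hm : m ≤ N) :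
    ∃ L : List ℕ, L.length = m ∧ (∀ k ∈ L, k < n) ∧ HasInversionsUpTo w F m (wordProd L) ∧
      ∀ z ∈ inversions w, F z ≤ m → reflOrder L (F z - 1) = eVec z.1 - eVec z.2 := by
  have hpos : ∀ z ∈ inversions w, 1 ≤ F z := fun z hz => (hF.bijOn.mapsTo hz).1
  induction m with
  | zero =>
    refine ⟨[], rfl, fun _ h => absurd h List.not_mem_nil, fun p q hqp => ?_, fun z hz hz₀ => ?_⟩
    · refine iff_of_false hqp.not_gt fun h => ?_
      have := hpos _ ((normalForm_mem_inversions_iff hw hqp).2 h.1)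
      omega
    · have := hpos z hz
      omega
  | succ m ih =>
    obtain ⟨L, rfl, hletters, hL, hroots⟩ := ih (by omega)
    obtain ⟨⟨a, b⟩, hab, hlabel⟩ := hF.bijOn.surjOn (Set.mem_Icc.2 ⟨Nat.le_add_left 1 _, hm⟩)
    have hLs := isSignedPerm_wordProd hletters
    obtain ⟨k, hkn, hk⟩ := hL.exists_letter hLs hw hF hab hlabel
    refine ⟨L ++ [k], List.length_append, List.forall_mem_append.2 ⟨hletters, by simpa⟩, ?_, ?_⟩
    · rw [wordProd_append_singleton]
      exact hL.mul_sB hLs hw hF hab hlabel hk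
    intro z hz hle
    have := hpos z hz
    rcases hle.lt_or_eq with hlt | heq
    · rw [reflOrder_append_singleton_of_lt (by omega)]
      exact hroots z hz (by omega)
    · obtain rfl : z = (a, b) := hF.bijOn.injOn hz hab (heq.trans hlabel.symm)
      rw [heq, Nat.add_sub_cancel, reflOrder_append_singleton_length]
      exact actB_alphaRoot hLs hab.1.ne' hk

lemma IsBalancedLabeling.encard_inversions (hF : IsBalancedLabeling w N F) :
    (inversions w).encard = N := by
  rw [← hF.bijOn.injOn.encard_image, hF.bijOn.image_eq, ← Finset.coe_Icc,
    Set.encard_coe_eq_coe_finsetCard, Nat.card_Icc, Nat.add_sub_cancel]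

lemma length_eq_lengthB_wordProd (hletters : ∀ k ∈ L, k < n)
    (hlen : (inversions (wordProd L)).encard = L.length) : L.length = lengthB n (wordProd L) := by
  refine le_antisymm (le_csInf ⟨_, L, hletters, rfl, rfl⟩ ?_) (Nat.sInf_le ⟨L, hletters, rfl, rfl⟩)
  rintro _ ⟨L', hletters', hprod, rfl⟩
  rw [← Nat.cast_le (α := ℕ∞), ← hlen, ← hprod]
  exact encard_inversions_wordProd_le hletters'

theorem IsBalancedLabeling.existsUnique_isReducedWord (hF : IsBalancedLabeling w N F)
    (hw : IsSignedPerm n w) : ∃! L : List ℕ, IsReducedWord n w L ∧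
      ∀ z ∈ inversions w, reflOrder L (F z - 1) = eVec z.1 - eVec z.2 := by
  obtain ⟨L, hlen, hletters, hL, hroots⟩ := hF.exists_wordProd_hasInversionsUpTo hw le_rfl
  have hle : ∀ z ∈ inversions w, F z ≤ N := fun z hz => (hF.bijOn.mapsTo hz).2
  obtain rfl : wordProd L = w :=
    (isSignedPerm_wordProd hletters).eq_of_inv_lt_inv_iff hw fun p q hqp => by
      rw [hL p q hqp, and_iff_left_iff_imp]
      exact fun h => hle _ ((normalForm_mem_inversions_iff hw hqp).2 h)
  have hlengthB := length_eq_lengthB_wordProd hletters (hF.encard_inversions.trans (by rw [hlen]))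
  refine ⟨L, ⟨⟨hletters, rfl, hlengthB⟩, fun z hz => hroots z hz (hle z hz)⟩, ?_⟩
  rintro L' ⟨⟨-, -, hlength'⟩, hroots'⟩
  refine eq_of_reflOrder_eq (hlength'.trans hlengthB.symm) fun t ht => ?_
  obtain ⟨z, hz, hzt⟩ := hF.bijOn.surjOn (Set.mem_Icc.2 ⟨Nat.le_add_left 1 t, by omega⟩)
  rw [← Nat.add_sub_cancel t 1, ← hzt, hroots' z hz, hroots z hz (hle z hz)]

end ReflectionOrder

section Trapezoid

/-- The roots of the form `e_a - e_b` labeling the extended diagram of `Z(d,r)`, encoded as pairs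
`(a, b)` with `|b| < a` on the diagram and `b = -a` on the added boxes. -/
def extRoots (d r : ℕ) : Set (ℤ × ℤ) :=
  {z | -z.1 ≤ z.2 ∧ z.2 < z.1 ∧ z.1 ≤ d + r ∧ (z.1 ≤ d ∨ (-(d : ℤ) ≤ z.2 ∧ z.2 < 0))}

/-- The box of the extended diagram of `Z(d,r)` labeled by the root `e_a - e_b`. -/
def box (d r : ℕ) (z : ℤ × ℤ) : ℤ × ℤ :=
  if z.1 ≤ d then if z.2 ≤ 0 then (d + 1 - z.1, z.2) else (d + 1 - z.1, z.2 + r)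
  else (d + 1 + z.2, z.1 - d)

/-- The root labeling a box of the extended diagram of `Z(d,r)`; the inverse of `box`. -/
def boxRoot (d r : ℕ) (y : ℤ × ℤ) : ℤ × ℤ :=
  if y.2 ≤ 0 then (d + 1 - y.1, y.2)
  else if y.2 ≤ r then (d + y.2, y.1 - (d + 1)) else (d + 1 - y.1, y.2 - r)

/-- The representative `(a, b)` with `-a ≤ b` of the root `e_p - e_q`. Unlike `normalForm`, it keeps
`2 e_p` apart from `e_p`. -/
def extForm (p q : ℤ) : ℤ × ℤ :=
  if -p ≤ q then (p, q) else (-q, -p)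

variable {d r : ℕ} {lam : ℕ → ℕ} {w : Equiv.Perm ℤ} {B : ℤ × ℤ → ℕ} {a b c i p q p' q' : ℤ}
  {y z : ℤ × ℤ}

lemma mem_extRoots : (a, b) ∈ extRoots d r ↔
    -a ≤ b ∧ b < a ∧ a ≤ d + r ∧ (a ≤ d ∨ (-(d : ℤ) ≤ b ∧ b < 0)) :=
  Iff.rfl

lemma mem_diagram_Zlam : (i, c) ∈ Diagram d (Zlam d r) ↔
    1 ≤ i ∧ i ≤ d ∧ i - d ≤ c ∧ c ≤ r + d - i := by
  simp only [Diagram, Zlam, Set.mem_ofPred_eq]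
  omega

lemma mem_extDiagram_Zlam : (i, c) ∈ ExtDiagram d (Zlam d r) ↔
    1 ≤ i ∧ i ≤ d ∧ i - (d + 1) ≤ c ∧ c ≤ r + d - i := by
  rw [ExtDiagram, Set.mem_union, mem_diagram_Zlam]
  simp only [Set.mem_ofPred_eq]
  omega

lemma rk_Zlam (hic : (i, c) ∈ Diagram d (Zlam d r)) :
    rk d (Zlam d r) i c = r + d + 1 - i - c + if c < 0 then (r : ℤ) else 0 := by
  rw [mem_diagram_Zlam] at hic
  unfold rk Zlam
  split_ifs <;> omega

lemma mem_extHook_iff (hic : (i, c) ∈ Diagram d lam) : y ∈ ExtHook d lam i c ↔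
    y ∈ ExtDiagram d lam ∧
      ((y.1 = i ∧ c ≤ y.2) ∨ (y.2 = c ∧ i < y.1) ∨ (c < 0 ∧ y.1 = (d : ℤ) + 1 + c)) := by
  obtain ⟨j, k⟩ := y
  by_cases hjk : (j, k) = (i, c)
  · obtain ⟨rfl, rfl⟩ := Prod.mk.inj hjk
    exact iff_of_true (Or.inl (Or.inl (Or.inl rfl))) ⟨Or.inl hic, Or.inl ⟨rfl, le_rfl⟩⟩
  simp only [ExtHook, Hook, ExtDiagram, Set.mem_union, Set.mem_singleton_iff, Set.mem_ofPred_eq,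
    Prod.mk.injEq] at hjk ⊢
  obtain ⟨hpos, hle, hcol, -⟩ := hic
  simp only at hpos hle hcol
  by_cases hD : (j, k) ∈ Diagram d lam
  · simp only [hD, true_and, true_or]
    omega
  · simp only [hD, false_and, or_false, false_or]
    omega

lemma bijOn_box_extRoots : Set.BijOn (box d r) (extRoots d r) (ExtDiagram d (Zlam d r)) := by
  refine Set.InvOn.bijOn (f' := boxRoot d r) ⟨?_, ?_⟩ ?_ ?_
  · rintro ⟨a, b⟩ h
    rw [mem_extRoots] at h
    unfold box
    split_ifs <;> simp only [boxRoot] <;> split_ifs <;> simp only [Prod.mk.injEq, and_true] <;>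
      omega
  · rintro ⟨i, c⟩ h
    rw [mem_extDiagram_Zlam] at h
    unfold boxRoot
    split_ifs <;> simp only [box] <;> split_ifs <;> simp only [Prod.mk.injEq, and_true] <;> omega
  · rintro ⟨a, b⟩ h
    rw [mem_extRoots] at h
    unfold box
    split_ifs <;> rw [mem_extDiagram_Zlam] <;> omega
  · rintro ⟨i, c⟩ h
    rw [mem_extDiagram_Zlam] at h
    unfold boxRoot
    split_ifs <;> rw [mem_extRoots] <;> omega

lemma box_mem_diagram_iff (hz : z ∈ extRoots d r) :
    box d r z ∈ Diagram d (Zlam d r) ↔ -z.1 < z.2 := by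
  obtain ⟨a, b⟩ := z
  rw [mem_extRoots] at hz
  unfold box
  split_ifs <;> rw [mem_diagram_Zlam] <;> omega

lemma fLabel_box (hz : z ∈ extRoots d r) : fLabel d r (box d r z) = eVec z.1 - eVec z.2 := by
  obtain ⟨a, b⟩ := z
  rw [mem_extRoots] at hz
  unfold box
  split_ifs with ha hb
  · rw [fLabel, if_pos hb, sub_sub_cancel]
  · rw [fLabel, if_neg (by simp only; omega), if_neg (by simp only; omega), sub_sub_cancel,
      add_sub_cancel_right]
  · rw [fLabel, if_neg (by simp only; omega), if_pos (by simp only; omega), sub_add_cancel,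
      sub_add_cancel_left, eVec_neg, neg_add_eq_sub]

lemma IsWdr.inv_apply (hw : IsWdr d r w) (i : ℤ) : w⁻¹ i =
    if 0 < i ∧ i ≤ d then -(i + r) else if -(d : ℤ) ≤ i ∧ i < 0 then r - i
    else if d < i ∧ i ≤ d + r then i - d else if -(d + r : ℤ) ≤ i ∧ i < -d then i + d else i := by
  obtain ⟨hs, hlow, hhigh⟩ := hw
  rw [Equiv.Perm.inv_eq_iff_eq]
  split_ifs
  · rw [hs.1, hhigh _ (by omega) (by omega)]
    omega
  · rw [hhigh _ (by omega) (by omega)]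
    omega
  · rw [hlow _ (by omega) (by omega)]
    omega
  · rw [← neg_neg (i + d), hs.1, hlow _ (by omega) (by omega)]
    omega
  · rcases eq_or_ne i 0 with rfl | hi
    · exact hs.apply_zero.symm
    · exact (hs.2 i (by rw [lt_abs]; omega)).symm

lemma IsWdr.inv_lt_inv_iff (hw : IsWdr d r w) (hqp : q < p) : w⁻¹ p < w⁻¹ q ↔
    -(d + r : ℤ) ≤ q ∧ p ≤ d + r ∧ ((0 < p ∧ p ≤ d) ∨ (-(d : ℤ) ≤ q ∧ q < 0)) := by
  rw [hw.inv_apply, hw.inv_apply]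
  split_ifs <;> omega

lemma IsWdr.mem_inversions_iff (hw : IsWdr d r w) :
    z ∈ inversions w ↔ z ∈ extRoots d r ∧ -z.1 < z.2 := by
  simp only [inversions, extRoots, Set.mem_ofPred_eq]
  have := hw.inv_lt_inv_iff (p := z.1) (q := z.2)
  omega

lemma IsWdr.box_mem_diagram (hw : IsWdr d r w) (hz : z ∈ inversions w) :
    box d r z ∈ Diagram d (Zlam d r) := by
  have ⟨hroot, hlt⟩ := hw.mem_inversions_iff.1 hz
  exact (box_mem_diagram_iff hroot).2 hlt

lemma IsWdr.bijOn_box_inversions (hw : IsWdr d r w) :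
    Set.BijOn (box d r) (inversions w) (Diagram d (Zlam d r)) := by
  refine ⟨fun z => hw.box_mem_diagram,
    bijOn_box_extRoots.injOn.mono fun z hz => (hw.mem_inversions_iff.1 hz).1, fun y hy => ?_⟩
  obtain ⟨z, hz, rfl⟩ := bijOn_box_extRoots.surjOn (Or.inl hy)
  exact ⟨z, hw.mem_inversions_iff.2 ⟨hz, (box_mem_diagram_iff hz).1 hy⟩, rfl⟩

lemma IsWdr.rk_box (hw : IsWdr d r w) (hz : z ∈ inversions w) :
    rk d (Zlam d r) (box d r z).1 (box d r z).2 = w⁻¹ z.2 - w⁻¹ z.1 := by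
  rw [rk_Zlam (by exact hw.box_mem_diagram hz), hw.inv_apply, hw.inv_apply]
  obtain ⟨a, b⟩ := z
  have ⟨hroot, hlt⟩ := hw.mem_inversions_iff.1 hz
  rw [mem_extRoots] at hroot
  unfold box
  split_ifs at * <;> omega

lemma IsWdr.extForm_mem_extRoots (hw : IsWdr d r w) (hqp : q < p) (hinv : w⁻¹ p < w⁻¹ q) :
    extForm p q ∈ extRoots d r := by
  rw [hw.inv_lt_inv_iff hqp] at hinv
  unfold extForm
  split_ifs <;> rw [mem_extRoots] <;> omega

lemma extForm_eq_iff (h : -a ≤ b) :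
    extForm p q = (a, b) ↔ (p = a ∧ q = b) ∨ (p = -b ∧ q = -a) := by
  unfold extForm
  split_ifs <;> simp only [Prod.mk.injEq] <;> omega

lemma IsWdr.extFilling_box_extForm (hw : IsWdr d r w) (hqp : q < p) (hinv : w⁻¹ p < w⁻¹ q) :
    ExtFilling d B (box d r (extForm p q)) = B (box d r (normalForm p q)) := by
  have hroot := hw.extForm_mem_extRoots hqp hinv
  by_cases hneg : q = -p
  · subst hneg
    have hp := (hw.inv_lt_inv_iff hqp).1 hinv
    simp only [extForm, normalForm, le_refl, if_true, box]
    rw [if_pos (by omega), if_pos (by omega), if_pos (by omega), ExtFilling, if_pos]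
    simp only
    omega
  · have hform : extForm p q = normalForm p q := by
      unfold extForm normalForm
      split_ifs <;> simp only [Prod.mk.injEq] <;> omega
    have hdiag := (box_mem_diagram_iff hroot).2 (by
      unfold extForm
      split_ifs <;> simp only <;> omega)
    rw [ExtFilling, if_neg, hform]
    have := hdiag.2.2.1
    omega

lemma exists_extForm_eq_iff (hneg : -a ≤ b) (hba : b < a) :
    (∃ c ∈ hookIndices w p q, (c < p ∧ extForm p c = (a, b)) ∨ (q < c ∧ extForm c q = (a, b))) ↔
      (a = p ∧ b ∈ hookIndices w p q) ∨ (b = -p ∧ -a ∈ hookIndices w p q) ∨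
        (b = q ∧ a ∈ hookIndices w p q) ∨ (a = -q ∧ -b ∈ hookIndices w p q) := by
  simp only [extForm_eq_iff hneg]
  constructor
  · rintro ⟨c, hc, ⟨-, ⟨rfl, rfl⟩ | ⟨rfl, rfl⟩⟩ | ⟨-, ⟨rfl, rfl⟩ | ⟨rfl, rfl⟩⟩⟩ <;>
      simp only [neg_neg, hc, and_self, true_or, or_true]
  · rintro (⟨rfl, hc⟩ | ⟨rfl, hc⟩ | ⟨rfl, hc⟩ | ⟨rfl, hc⟩) <;> refine ⟨_, hc, ?_⟩ <;> omega

lemma IsWdr.mem_hookIndices_iff (hw : IsWdr d r w) (hpq : (p, q) ∈ inversions w) :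
    c ∈ hookIndices w p q ↔ if p ≤ d then if q ≤ 0 then
        (-(d + r : ℤ) ≤ c ∧ c < -d) ∨ (q < c ∧ c < p) ∨ (q < 0 ∧ d < c ∧ c ≤ d + r)
      else q < c ∧ c < p else (p < c ∧ c ≤ d + r) ∨ (q < c ∧ c < 0) := by
  have ⟨hroot, hneg⟩ := hw.mem_inversions_iff.1 hpq
  rw [mem_extRoots] at hroot
  have hp : w⁻¹ p = if p ≤ d then -(p + r) else p - d := by
    rw [hw.inv_apply]
    split_ifs <;> omega
  have hq : w⁻¹ q = if 0 < q then -(q + r) else if q < 0 then r - q else 0 := by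
    rw [hw.inv_apply]
    split_ifs <;> omega
  rw [mem_hookIndices, hp, hq, hw.inv_apply c]
  split_ifs <;> omega

lemma IsWdr.box_mem_extHook_iff (hw : IsWdr d r w) (hpq : (p, q) ∈ inversions w)
    (hab : (a, b) ∈ extRoots d r) :
    box d r (a, b) ∈ ExtHook d (Zlam d r) (box d r (p, q)).1 (box d r (p, q)).2 ↔
      (a = p ∧ b = q) ∨ ∃ c ∈ hookIndices w p q,
        (c < p ∧ extForm p c = (a, b)) ∨ (q < c ∧ extForm c q = (a, b)) := by
  rw [mem_extHook_iff (by exact hw.box_mem_diagram hpq),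
    and_iff_right (bijOn_box_extRoots.mapsTo hab),
    exists_extForm_eq_iff hab.1 hab.2.1]
  have ⟨hroot, hneg⟩ := hw.mem_inversions_iff.1 hpq
  rw [mem_extRoots] at hroot hab
  simp only [hw.mem_hookIndices_iff hpq, box]
  split_ifs <;> simp only <;> omega

lemma IsWdr.eq_of_box_extForm_eq (hw : IsWdr d r w) (hqp : q < p) (hinv : w⁻¹ p < w⁻¹ q)
    (hqp' : q' < p') (hinv' : w⁻¹ p' < w⁻¹ q')
    (h : box d r (extForm p q) = box d r (extForm p' q')) :
    (p' = p ∧ q' = q) ∨ (p' = -q ∧ q' = -p) := by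
  have h := bijOn_box_extRoots.injOn (hw.extForm_mem_extRoots hqp hinv)
    (hw.extForm_mem_extRoots hqp' hinv') h
  unfold extForm at h
  split_ifs at h <;> rw [Prod.mk.injEq] at h <;> omega

lemma IsWdr.mem_extHook_box_iff (hw : IsWdr d r w) (hpq : (p, q) ∈ inversions w) :
    y ∈ ExtHook d (Zlam d r) (box d r (p, q)).1 (box d r (p, q)).2 ↔ y = box d r (p, q) ∨
      ∃ c ∈ hookIndices w p q,
        (c < p ∧ box d r (extForm p c) = y) ∨ (q < c ∧ box d r (extForm c q) = y) := by
  have hpq' := (hw.mem_inversions_iff.1 hpq).1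
  constructor
  · intro hy
    obtain ⟨⟨a, b⟩, hab, rfl⟩ := bijOn_box_extRoots.surjOn
      ((mem_extHook_iff (by exact hw.box_mem_diagram hpq)).1 hy).1
    refine ((hw.box_mem_extHook_iff hpq hab).1 hy).imp ?_ ?_
    · rintro ⟨rfl, rfl⟩
      rfl
    · rintro ⟨c, hc, h⟩
      exact ⟨c, hc, h.imp (.imp_right (congrArg _)) (.imp_right (congrArg _))⟩
  · rintro (rfl | ⟨c, hc, ⟨hcp, rfl⟩ | ⟨hqc, rfl⟩⟩)
    · exact (hw.box_mem_extHook_iff hpq hpq').2 (Or.inl ⟨rfl, rfl⟩)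
    · exact (hw.box_mem_extHook_iff hpq
        (hw.extForm_mem_extRoots hcp (mem_hookIndices.1 hc).1)).2
          (Or.inr ⟨c, hc, Or.inl ⟨hcp, rfl⟩⟩)
    · exact (hw.box_mem_extHook_iff hpq
        (hw.extForm_mem_extRoots hqc (mem_hookIndices.1 hc).2)).2
          (Or.inr ⟨c, hc, Or.inr ⟨hqc, rfl⟩⟩)

lemma IsWdr.setOf_extHook_box_eq (hw : IsWdr d r w) (hpq : (p, q) ∈ inversions w) :
    {y ∈ ExtHook d (Zlam d r) (box d r (p, q)).1 (box d r (p, q)).2 |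
        B (box d r (p, q)) < ExtFilling d B y} =
      ↑(((hookIndices w p q).filter fun c => c < p ∧
          B (box d r (p, q)) < B (box d r (normalForm p c))).image (box d r <| extForm p ·) ∪
        ((hookIndices w p q).filter fun c => q < c ∧
          B (box d r (p, q)) < B (box d r (normalForm c q))).image (box d r <| extForm · q)) := by
  have ⟨hneg, hqp, hinv⟩ := hpq
  have hcorner : ExtFilling d B (box d r (p, q)) = B (box d r (p, q)) := by
    have := hw.extFilling_box_extForm (B := B) hqp hinv
    rwa [extForm, if_pos hneg.le, normalForm_of_lt hneg] at this
  have harm : ∀ c ∈ hookIndices w p q, c < p →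
      ExtFilling d B (box d r (extForm p c)) = B (box d r (normalForm p c)) := fun c hc hcp =>
    hw.extFilling_box_extForm hcp (mem_hookIndices.1 hc).1
  have hleg : ∀ c ∈ hookIndices w p q, q < c →
      ExtFilling d B (box d r (extForm c q)) = B (box d r (normalForm c q)) := fun c hc hqc =>
    hw.extFilling_box_extForm hqc (mem_hookIndices.1 hc).2
  ext y
  simp only [Set.mem_ofPred_eq, hw.mem_extHook_box_iff hpq, Finset.coe_union, Finset.coe_image,
    Finset.coe_filter, Set.mem_union, Set.mem_image]
  constructor
  · rintro ⟨rfl | ⟨c, hc, ⟨hcp, rfl⟩ | ⟨hqc, rfl⟩⟩, hlt⟩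
    · exact absurd hcorner hlt.ne'
    · exact Or.inl ⟨c, ⟨hc, hcp, harm c hc hcp ▸ hlt⟩, rfl⟩
    · exact Or.inr ⟨c, ⟨hc, hqc, hleg c hc hqc ▸ hlt⟩, rfl⟩
  · rintro (⟨c, ⟨hc, hcp, hlt⟩, rfl⟩ | ⟨c, ⟨hc, hqc, hlt⟩, rfl⟩)
    · exact ⟨Or.inr ⟨c, hc, Or.inl ⟨hcp, rfl⟩⟩, (harm c hc hcp).symm ▸ hlt⟩
    · exact ⟨Or.inr ⟨c, hc, Or.inr ⟨hqc, rfl⟩⟩, (hleg c hc hqc).symm ▸ hlt⟩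

lemma IsWdr.hookBalanced (hw : IsWdr d r w) (hpq : (p, q) ∈ inversions w)
    (hB : ({y ∈ ExtHook d (Zlam d r) (box d r (p, q)).1 (box d r (p, q)).2 |
      B (box d r (p, q)) < ExtFilling d B y}.ncard : ℤ) =
        rk d (Zlam d r) (box d r (p, q)).1 (box d r (p, q)).2 - 1) :
    HookBalanced w (B ∘ box d r) p q := by
  have ⟨hneg, hqp, hinv⟩ := hpq
  simp only at hneg hqp hinv
  rw [hw.setOf_extHook_box_eq hpq, hw.rk_box hpq, ← card_hookIndices hinv, Nat.cast_inj,
    Set.ncard_coe_finset, Finset.card_union_of_disjoint, Finset.card_image_of_injOn,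
    Finset.card_image_of_injOn] at hB
  · rwa [HookBalanced, normalForm_of_lt hneg]
  · intro c hc e he heq
    rw [Finset.mem_coe, Finset.mem_filter, mem_hookIndices] at hc he
    have := hw.eq_of_box_extForm_eq hc.2.1 hc.1.2 he.2.1 he.1.2 heq
    omega
  · intro c hc e he heq
    rw [Finset.mem_coe, Finset.mem_filter, mem_hookIndices] at hc he
    have := hw.eq_of_box_extForm_eq hc.2.1 hc.1.1 he.2.1 he.1.1 heq
    omega
  · simp only [Finset.disjoint_left, Finset.mem_image, Finset.mem_filter, mem_hookIndices]
    rintro _ ⟨c, hc, rfl⟩ ⟨e, he, heq⟩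
    have := hw.eq_of_box_extForm_eq he.2.1 he.1.2 hc.2.1 hc.1.1 heq
    have : e ≠ p := fun h => (h ▸ he.1.1).false
    omega

lemma IsBalanced.isBalancedLabeling (hB : IsBalanced d (Zlam d r) B) (hw : IsWdr d r w) :
    IsBalancedLabeling w (sizeP d (Zlam d r)) (B ∘ box d r) where
  bijOn := hB.1.1.comp hw.bijOn_box_inversions
  hookBalanced _ _ hpq := hw.hookBalanced hpq (hB.2 _ (hw.box_mem_diagram hpq))

end Trapezoid

/-- every balanced shifted tableau of shape `Z(d,r)` arises from a
unique reduced word of `w^{(d,r)}` via the reflection order: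
`γ_{B(x)} = f(x)` for every box `x`. -/
theorem balanced_unique_reduced_word (d r : ℕ) (hd : 1 ≤ d)
    (w : Equiv.Perm ℤ) (hw : IsWdr d r w)
    (B : ℤ × ℤ → ℕ) (hB : IsBalanced d (Zlam d r) B) :
    ∃! L : List ℕ, IsReducedWord (d + r) w L ∧
      ∀ p ∈ Diagram d (Zlam d r), reflOrder L (B p - 1) = fLabel d r p := by
  have hlabels : ∀ L, (∀ p ∈ Diagram d (Zlam d r), reflOrder L (B p - 1) = fLabel d r p) ↔
      ∀ z ∈ inversions w, reflOrder L (B (box d r z) - 1) = eVec z.1 - eVec z.2 := fun L => by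
    rw [← hw.bijOn_box_inversions.image_eq, Set.forall_mem_image]
    exact forall₂_congr fun z hz => by rw [fLabel_box (hw.mem_inversions_iff.1 hz).1]
  simp only [hlabels]
  exact (hB.isBalancedLabeling hw).existsUnique_isReducedWord hw.1

end BST
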